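/- For every natural number n, setting l = 2^(2n+1), the two integers l^2 - 2^(3n+2) + l - 2^(n+1) + 1 and l^2 + 2^(3n+2) + l + 2^(n+1) + 1 are coprime, i.e. their greatest common divisor is 1. -/

import Mathlib

/-!
With `x = 2 ^ n` and `l = 2 * x ^ 2`, the two factors are `a - b` and `a + b`, where
`a = l ^ 2 + l + 1` and `b = 2 * x * (l + 1)`. Since `x * b = l * (l + 1) = a - 1`, the elements
`a` and `b` are coprime. Hence `a - b` is coprime to `b`, to its divisor `2`, and so to
`2 * b = (a + b) - (a - b)`.
-/

theorem isCoprime_sub_add_of_two_dvd {R : Type*} [CommRing R] {a b : R}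
    (hab : IsCoprime a b) (hb : 2 ∣ b) : IsCoprime (a - b) (a + b) := by
  have sub_b : IsCoprime (a - b) b := by
    simpa only [mul_one] using (IsCoprime.sub_mul_left_left_iff (z := 1)).mpr hab
  have sub_two : IsCoprime (a - b) 2 := sub_b.of_isCoprime_of_dvd_right hb
  have sub_two_mul : IsCoprime (a - b) (2 * b) := sub_two.mul_right sub_b
  have add_eq : a + b = 2 * b + (a - b) * 1 := by ring
  rw [add_eq]
  exact sub_two_mul.add_mul_left_right 1

theorem phi12_factors_coprime_general {R : Type*} [CommRing R] (x : R) :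
    IsCoprime ((2 * x ^ 2) ^ 2 - 4 * x ^ 3 + 2 * x ^ 2 - 2 * x + 1)
      ((2 * x ^ 2) ^ 2 + 4 * x ^ 3 + 2 * x ^ 2 + 2 * x + 1) := by
  have coprime : IsCoprime ((2 * x ^ 2) ^ 2 + 2 * x ^ 2 + 1) (2 * x * (2 * x ^ 2 + 1)) :=
    ⟨1, -x, by ring⟩
  have even : 2 ∣ 2 * x * (2 * x ^ 2 + 1) := (dvd_mul_right 2 x).mul_right _
  convert isCoprime_sub_add_of_two_dvd coprime even using 1 <;> ring

theorem phi12_factors_coprime (n : ℕ) :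
    Int.gcd ((2 ^ (2 * n + 1) : ℤ) ^ 2 - 2 ^ (3 * n + 2) + (2 ^ (2 * n + 1) : ℤ) - 2 ^ (n + 1) + 1)
      ((2 ^ (2 * n + 1) : ℤ) ^ 2 + 2 ^ (3 * n + 2) + (2 ^ (2 * n + 1) : ℤ) + 2 ^ (n + 1) + 1) = 1 := by
  rw [← Int.isCoprime_iff_gcd_eq_one]
  convert phi12_factors_coprime_general (2 ^ n : ℤ) using 1 <;> [rfl; ring; ring]
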